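/- Let ℓ > 0. For every x ∈ S one has w_ℓ(x) ≥ 0. Moreover, x ∈ S is Pareto stationary for min_{x∈S} F(x) if and only if w_ℓ(x) = 0. -/

import Mathlib

open scoped RealInnerProductSpace

/-- Directional derivative: `h′(x; d) = v` means `(h(x + t d) - h x)/t → v` as `t ↘ 0`. -/
def HasDirDeriv {n : ℕ} (h : EuclideanSpace ℝ (Fin n) → ℝ)
    (x d : EuclideanSpace ℝ (Fin n)) (v : ℝ) : Prop :=
  Filter.Tendsto (fun t : ℝ => (h (x + t • d) - h x) / t)
    (nhdsWithin 0 (Set.Ioi 0)) (nhds v)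

/-- The regularized and partially linearized merit function
`w_ℓ(x) = max_{y ∈ S} min_i (⟨∇f_i(x), x - y⟩ + g_i(x) - g_i(y) - (ℓ/2)‖x - y‖²)`,
where `Gf i x = ∇f_i(x)`. -/
noncomputable def meritW {n m : ℕ} (ℓ : ℝ) (S : Set (EuclideanSpace ℝ (Fin n)))
    (Gf : Fin m → EuclideanSpace ℝ (Fin n) → EuclideanSpace ℝ (Fin n))
    (g : Fin m → EuclideanSpace ℝ (Fin n) → ℝ)
    (x : EuclideanSpace ℝ (Fin n)) : ℝ :=
  sSup ((fun y => ⨅ i, (⟪Gf i x, x - y⟫ + g i x - g i y - ℓ / 2 * ‖x - y‖ ^ 2)) '' S)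

/-!
A convex function decreases at most linearly away from `x`, so the quadratic regularization keeps
the supremum defining `w_ℓ(x)` finite. At `y = x` every expression inside the minimum vanishes, so
`w_ℓ(x) ≥ 0`, and `w_ℓ(x) = 0` means that for each `y ∈ S` one of the expressions is nonpositive.
Convexity gives `g_i(y) - g_i(x) ≥ g_i′(x; y - x)`, so stationarity forces this. Conversely, along
the segment `y = x + t(z - x)` the regularization is of order `t²`, so if every `F_i′(x; z - x)` is
negative then for small `t > 0` all the expressions are positive.
-/

section NormedSpace

open Filter Set Topology

variable {E : Type*} [NormedAddCommGroup E] [NormedSpace ℝ E] {S : Set E} {h : E → ℝ}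
  {φ : E →L[ℝ] ℝ} {x y d : E} {v ℓ : ℝ}

/-- The one-sided directional derivative `h′(x; d) = v` on a real normed space, as the right
derivative at `0` of `t ↦ h (x + t d)`. On `EuclideanSpace` it agrees with `HasDirDeriv`. -/
def HasRightLineDerivAt (h : E → ℝ) (v : ℝ) (x d : E) : Prop :=
  HasDerivWithinAt (fun t : ℝ => h (x + t • d)) v (Ioi 0) 0

theorem hasDirDeriv_iff_hasRightLineDerivAt {n : ℕ} {h : EuclideanSpace ℝ (Fin n) → ℝ}
    {x d : EuclideanSpace ℝ (Fin n)} :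
    HasDirDeriv h x d v ↔ HasRightLineDerivAt h v x d := by
  rw [HasRightLineDerivAt, hasDerivWithinAt_iff_tendsto_slope' self_notMem_Ioi, HasDirDeriv]
  simp only [slope_fun_def_field, sub_zero, zero_smul, add_zero]

theorem hasRightLineDerivAt_of_hasFDerivAt (hh : HasFDerivAt h φ x) (d : E) :
    HasRightLineDerivAt h (φ d) x d :=
  HasDerivAt.hasDerivWithinAt (hh.hasLineDerivAt d)

theorem HasRightLineDerivAt.add {h₁ h₂ : E → ℝ} {v₁ v₂ : ℝ} (hd₁ : HasRightLineDerivAt h₁ v₁ x d)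
    (hd₂ : HasRightLineDerivAt h₂ v₂ x d) : HasRightLineDerivAt (h₁ + h₂) (v₁ + v₂) x d :=
  HasDerivWithinAt.add hd₁ hd₂

theorem HasRightLineDerivAt.sub {h₁ h₂ : E → ℝ} {v₁ v₂ : ℝ} (hd₁ : HasRightLineDerivAt h₁ v₁ x d)
    (hd₂ : HasRightLineDerivAt h₂ v₂ x d) : HasRightLineDerivAt (h₁ - h₂) (v₁ - v₂) x d :=
  HasDerivWithinAt.sub hd₁ hd₂

theorem HasRightLineDerivAt.le_sub_of_convexOn (hd : HasRightLineDerivAt h v x (y - x))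
    (hh : ConvexOn ℝ S h) (hx : x ∈ S) (hy : y ∈ S) : v ≤ h y - h x := by
  have hline : ⇑(AffineMap.lineMap x y : ℝ →ᵃ[ℝ] E) = fun t => x + t • (y - x) := by
    ext t
    rw [AffineMap.lineMap_apply_module', add_comm]
  have hconv := hh.comp_affineMap (AffineMap.lineMap x y : ℝ →ᵃ[ℝ] E)
  rw [hline] at hconv
  have hslope := hconv.le_slope_of_hasDerivWithinAt_Ioi (x := 0) (y := 1)
    (by simpa using hx) (by simpa using hy) one_pos hd
  simpa [slope_def_field] using hslope

theorem eventually_pos_of_hasDerivWithinAt_Ioi {u : ℝ → ℝ} {u' a : ℝ}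
    (hu : HasDerivWithinAt u u' (Ioi a) a) (hua : u a = 0) (hu' : 0 < u') :
    ∀ᶠ t in 𝓝[>] a, 0 < u t := by
  have hslope := (hasDerivWithinAt_iff_tendsto_slope' self_notMem_Ioi).mp hu
  filter_upwards [hslope.eventually_const_lt hu', self_mem_nhdsWithin] with t ht hat
  rw [slope_def_field, hua, sub_zero] at ht
  exact (div_pos_iff_of_pos_right (sub_pos.mpr hat)).mp ht

theorem ciInf_le_iff_exists_le {ι α : Type*} [Finite ι] [Nonempty ι]
    [ConditionallyCompleteLinearOrder α] {a : ι → α} {c : α} :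
    ⨅ i, a i ≤ c ↔ ∃ i, a i ≤ c := by
  refine ⟨fun hc => ?_, fun ⟨i, hi⟩ => (ciInf_le (Finite.bddBelow_range a) i).trans hi⟩
  obtain ⟨i, hi⟩ := exists_eq_ciInf_of_finite (f := a)
  exact ⟨i, hi.trans_le hc⟩

theorem exists_sub_le_one_add_mul_norm_of_convexOn (hh : ConvexOn ℝ S h)
    (hlsc : LowerSemicontinuousWithinAt h S x) (hx : x ∈ S) :
    ∃ C, ∀ y ∈ S, h x - h y ≤ 1 + C * ‖x - y‖ := by
  obtain ⟨δ, hδ, hball⟩ := Metric.mem_nhdsWithin_iff.mp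
    (lowerSemicontinuousWithinAt_iff.mp hlsc (h x - 1) (sub_one_lt _))
  refine ⟨δ⁻¹, fun y hy => ?_⟩
  -- With this `t` the point `x + t(y - x)` lies in the `δ`-ball around `x`, however far `y` is.
  set t := δ / (δ + ‖x - y‖) with ht
  have ht_pos : 0 < t := by positivity
  have ht_le : t ≤ 1 := div_le_one_of_le₀ (by simp) (by positivity)
  have ht_dist : t * ‖x - y‖ < δ := by
    rw [ht, div_mul_eq_mul_div, div_lt_iff₀ (by positivity)]
    nlinarith
  have hmem : x + t • (y - x) ∈ S := hh.1.add_smul_sub_mem hx hy ⟨ht_pos.le, ht_le⟩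
  have hlower : h x - 1 < h (x + t • (y - x)) := by
    refine hball ⟨?_, hmem⟩
    rwa [Metric.mem_ball, dist_self_add_left, norm_smul, Real.norm_of_nonneg ht_pos.le,
      norm_sub_rev]
  have hupper : h (x + t • (y - x)) ≤ (1 - t) * h x + t * h y := by
    have hcomb := hh.2 hx hy (sub_nonneg.mpr ht_le) ht_pos.le (sub_add_cancel 1 t)
    rwa [show (1 - t) • x + t • y = x + t • (y - x) by module] at hcomb
  calc h x - h y ≤ 1 / t := by
        rw [le_div_iff₀ ht_pos]
        linarith
    _ = 1 + δ⁻¹ * ‖x - y‖ := by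
        rw [ht]
        field_simp

/-- The regularized gap `φ(x - y) + h(x) - h(y) - (ℓ/2)‖x - y‖²`, the expression minimized over `i`
in `w_ℓ`. The gradient of the smooth part is encoded as a continuous linear functional `φ`. -/
noncomputable def regularizedGap (ℓ : ℝ) (φ : E →L[ℝ] ℝ) (h : E → ℝ) (x y : E) : ℝ :=
  φ (x - y) + h x - h y - ℓ / 2 * ‖x - y‖ ^ 2

@[simp]
theorem regularizedGap_self : regularizedGap ℓ φ h x x = 0 := by
  simp [regularizedGap]

theorem bddAbove_image_regularizedGap (hℓ : 0 < ℓ) (hh : ConvexOn ℝ S h)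
    (hlsc : LowerSemicontinuousWithinAt h S x) (hx : x ∈ S) (φ : E →L[ℝ] ℝ) :
    BddAbove (regularizedGap ℓ φ h x '' S) := by
  obtain ⟨C, hC⟩ := exists_sub_le_one_add_mul_norm_of_convexOn hh hlsc hx
  refine ⟨1 + (‖φ‖ + C) ^ 2 / (2 * ℓ), forall_mem_image.mpr fun y hy => ?_⟩
  have hφ : φ (x - y) ≤ ‖φ‖ * ‖x - y‖ := (le_abs_self _).trans (φ.le_opNorm _)
  have hquad : (‖φ‖ + C) * ‖x - y‖ - ℓ / 2 * ‖x - y‖ ^ 2 ≤ (‖φ‖ + C) ^ 2 / (2 * ℓ) := by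
    rw [le_div_iff₀ (by positivity)]
    nlinarith [sq_nonneg (‖φ‖ + C - ℓ * ‖x - y‖)]
  rw [regularizedGap]
  linarith [hC y hy]

theorem regularizedGap_nonpos (hℓ : 0 ≤ ℓ) (hh : ConvexOn ℝ S h) (hx : x ∈ S) (hy : y ∈ S)
    (hd : HasRightLineDerivAt h v x (y - x)) (hv : 0 ≤ φ (y - x) + v) :
    regularizedGap ℓ φ h x y ≤ 0 := by
  have hsub : v ≤ h y - h x := hd.le_sub_of_convexOn hh hx hy
  have hneg : φ (x - y) = -φ (y - x) := by rw [← map_neg, neg_sub]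
  have hreg : 0 ≤ ℓ / 2 * ‖x - y‖ ^ 2 := by positivity
  rw [regularizedGap]
  linarith

theorem hasDerivWithinAt_regularizedGap (hd : HasRightLineDerivAt h v x d) :
    HasDerivWithinAt (fun t : ℝ => regularizedGap ℓ φ h x (x + t • d)) (-(φ d + v)) (Ioi 0) 0 := by
  have hgap (t : ℝ) : regularizedGap ℓ φ h x (x + t • d) =
      -(t * φ d) + h x - h (x + t • d) - ℓ / 2 * ‖d‖ ^ 2 * t ^ 2 := by
    rw [regularizedGap, sub_add_cancel_left, map_neg, map_smul, smul_eq_mul, norm_neg, norm_smul,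
      mul_pow, Real.norm_eq_abs, sq_abs]
    ring
  have hlin : HasDerivWithinAt (fun t : ℝ => -(t * φ d) + h x) (-φ d) (Ioi 0) 0 := by
    simpa using ((hasDerivWithinAt_id (0 : ℝ) _).mul_const (φ d)).neg.add_const (h x)
  have hsq : HasDerivWithinAt (fun t : ℝ => ℓ / 2 * ‖d‖ ^ 2 * t ^ 2) 0 (Ioi 0) 0 := by
    simpa using ((hasDerivWithinAt_id (0 : ℝ) _).pow 2).const_mul (ℓ / 2 * ‖d‖ ^ 2)
  simp only [hgap]
  exact ((hlin.sub hd).sub hsq).congr_deriv (by ring)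

theorem eventually_regularizedGap_pos (hd : HasRightLineDerivAt h v x d) (hv : φ d + v < 0) :
    ∀ᶠ t : ℝ in 𝓝[>] 0, 0 < regularizedGap ℓ φ h x (x + t • d) :=
  eventually_pos_of_hasDerivWithinAt_Ioi (hasDerivWithinAt_regularizedGap hd) (by simp)
    (neg_pos.mpr hv)

/-- The merit function `w_ℓ` on a real normed space, for an arbitrary family of objectives, as the
supremum over `S` of the minimum of the regularized gaps; `f' i x` is the derivative of `f_i` at
`x`. As a real `sSup` it is meaningful only where the gaps are bounded above on `S`. -/
noncomputable def regularizedMerit {ι : Type*} (ℓ : ℝ) (S : Set E) (f' : ι → E → E →L[ℝ] ℝ)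
    (g : ι → E → ℝ) (x : E) : ℝ :=
  sSup ((fun y => ⨅ i, regularizedGap ℓ (f' i x) (g i) x y) '' S)

variable {ι : Type*} [Finite ι] [Nonempty ι] {f' : ι → E → E →L[ℝ] ℝ} {g : ι → E → ℝ}

theorem bddAbove_image_iInf_regularizedGap (hℓ : 0 < ℓ) (hg : ∀ i, ConvexOn ℝ S (g i))
    (hlsc : ∀ i, LowerSemicontinuousOn (g i) S) (hx : x ∈ S) :
    BddAbove ((fun y => ⨅ i, regularizedGap ℓ (f' i x) (g i) x y) '' S) := by
  obtain ⟨i⟩ := ‹Nonempty ι›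
  obtain ⟨b, hb⟩ := bddAbove_image_regularizedGap hℓ (hg i) (hlsc i x hx) hx (f' i x)
  exact ⟨b, forall_mem_image.mpr fun y hy =>
    (ciInf_le (Finite.bddBelow_range _) i).trans (hb (mem_image_of_mem _ hy))⟩

theorem regularizedMerit_nonneg (hℓ : 0 < ℓ) (hg : ∀ i, ConvexOn ℝ S (g i))
    (hlsc : ∀ i, LowerSemicontinuousOn (g i) S) (hx : x ∈ S) :
    0 ≤ regularizedMerit ℓ S f' g x :=
  le_csSup (bddAbove_image_iInf_regularizedGap hℓ hg hlsc hx) ⟨x, hx, by simp⟩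

theorem regularizedMerit_eq_zero_iff (hℓ : 0 < ℓ) (hg : ∀ i, ConvexOn ℝ S (g i))
    (hlsc : ∀ i, LowerSemicontinuousOn (g i) S) (hx : x ∈ S) :
    regularizedMerit ℓ S f' g x = 0 ↔
      ∀ y ∈ S, ∃ i, regularizedGap ℓ (f' i x) (g i) x y ≤ 0 := by
  rw [← (regularizedMerit_nonneg hℓ hg hlsc hx).ge_iff_eq', regularizedMerit,
    csSup_le_iff (bddAbove_image_iInf_regularizedGap hℓ hg hlsc hx) ⟨_, mem_image_of_mem _ hx⟩]
  simp only [forall_mem_image, ciInf_le_iff_exists_le]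

theorem forall_exists_nonneg_iff_forall_exists_regularizedGap_nonpos {φ : ι → E →L[ℝ] ℝ}
    {dg : ι → E → ℝ} (hℓ : 0 ≤ ℓ) (hg : ∀ i, ConvexOn ℝ S (g i)) (hx : x ∈ S)
    (hdg : ∀ i, ∀ z ∈ S, HasRightLineDerivAt (g i) (dg i (z - x)) x (z - x)) :
    (∀ z ∈ S, ∃ i, 0 ≤ φ i (z - x) + dg i (z - x)) ↔
      ∀ y ∈ S, ∃ i, regularizedGap ℓ (φ i) (g i) x y ≤ 0 := by
  constructor
  · intro hstat y hy
    obtain ⟨i, hi⟩ := hstat y hy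
    exact ⟨i, regularizedGap_nonpos hℓ (hg i) hx hy (hdg i y hy) hi⟩
  · intro hgap z hz
    by_contra! hdescent
    have hpos : ∀ᶠ t : ℝ in 𝓝[>] 0, ∀ i, 0 < regularizedGap ℓ (φ i) (g i) x (x + t • (z - x)) :=
      eventually_all.mpr fun i => eventually_regularizedGap_pos (hdg i z hz) (hdescent i)
    obtain ⟨t, ht_pos, ht_mem⟩ := (hpos.and (Ioo_mem_nhdsGT one_pos)).exists
    have hmem : x + t • (z - x) ∈ S :=
      (hg (Classical.arbitrary ι)).1.add_smul_sub_mem hx hz (Ioo_subset_Icc_self ht_mem)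
    obtain ⟨i, hi⟩ := hgap _ hmem
    exact hi.not_gt (ht_pos i)

theorem meritW_nonneg_and_zero_iff_pareto_stationary_general {f : ι → E → ℝ}
    {dF : ι → E → E → ℝ} (hf : ∀ i, ∀ x ∈ S, HasFDerivAt (f i) (f' i x) x)
    (hg : ∀ i, ConvexOn ℝ S (g i)) (hlsc : ∀ i, LowerSemicontinuousOn (g i) S)
    (hdF : ∀ i, ∀ x ∈ S, ∀ z ∈ S, HasRightLineDerivAt (f i + g i) (dF i x (z - x)) x (z - x))
    (hℓ : 0 < ℓ) :
    (∀ x ∈ S, 0 ≤ regularizedMerit ℓ S f' g x) ∧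
    (∀ x ∈ S, ((∀ z ∈ S, ∃ i, 0 ≤ dF i x (z - x)) ↔ regularizedMerit ℓ S f' g x = 0)) := by
  refine ⟨fun x hx => regularizedMerit_nonneg hℓ hg hlsc hx, fun x hx => ?_⟩
  have hdg : ∀ i, ∀ z ∈ S,
      HasRightLineDerivAt (g i) (dF i x (z - x) - f' i x (z - x)) x (z - x) := fun i z hz => by
    simpa only [add_sub_cancel_left] using
      (hdF i x hx z hz).sub (hasRightLineDerivAt_of_hasFDerivAt (hf i x hx) (z - x))
  rw [regularizedMerit_eq_zero_iff hℓ hg hlsc hx,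
    ← forall_exists_nonneg_iff_forall_exists_regularizedGap_nonpos
      (dg := fun i d => dF i x d - f' i x d) hℓ.le hg hx hdg]
  simp only [add_sub_cancel]

end NormedSpace

/-- `w_ℓ ≥ 0` on `S`, and `x ∈ S` is Pareto stationary
(`max_i F_i′(x; z - x) ≥ 0` for all `z ∈ S`, where
`F_i′(x; d) = ⟨∇f_i(x), d⟩ + g_i′(x; d)`) iff `w_ℓ x = 0`. -/
theorem meritW_nonneg_and_zero_iff_pareto_stationary {n m : ℕ} (hm : 0 < m)
    (S : Set (EuclideanSpace ℝ (Fin n))) (hS : S.Nonempty)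
    (hSclosed : IsClosed S) (hSconv : Convex ℝ S)
    (f g : Fin m → EuclideanSpace ℝ (Fin n) → ℝ)
    (Gf : Fin m → EuclideanSpace ℝ (Fin n) → EuclideanSpace ℝ (Fin n))
    (hGf : ∀ i y, HasGradientAt (f i) (Gf i y) y)
    (hGfc : ∀ i, Continuous (Gf i))
    (hgconv : ∀ i, ConvexOn ℝ Set.univ (g i))
    (dg : Fin m → EuclideanSpace ℝ (Fin n) → EuclideanSpace ℝ (Fin n) → ℝ)
    (hdg : ∀ i y d, HasDirDeriv (g i) y d (dg i y d))
    (ℓ : ℝ) (hℓ : 0 < ℓ) :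
    (∀ x ∈ S, 0 ≤ meritW ℓ S Gf g x) ∧
    (∀ x ∈ S,
      ((∀ z ∈ S, ∃ i, 0 ≤ ⟪Gf i x, z - x⟫ + dg i x (z - x)) ↔
        meritW ℓ S Gf g x = 0)) := by
  have : Nonempty (Fin m) := ⟨⟨0, hm⟩⟩
  have hgcont (i : Fin m) : Continuous (g i) :=
    continuousOn_univ.mp ((hgconv i).continuousOn isOpen_univ)
  exact meritW_nonneg_and_zero_iff_pareto_stationary_general
    (f' := fun i x => innerSL ℝ (Gf i x)) (dF := fun i x d => ⟪Gf i x, d⟫ + dg i x d)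
    (fun i x _ => (hGf i x).hasFDerivAt) (fun i => (hgconv i).subset S.subset_univ hSconv)
    (fun i => (hgcont i).lowerSemicontinuous.lowerSemicontinuousOn S)
    (fun i x _ z _ => (hasRightLineDerivAt_of_hasFDerivAt (hGf i x).hasFDerivAt (z - x)).add
      (hasDirDeriv_iff_hasRightLineDerivAt.mp (hdg i x (z - x)))) hℓ
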